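/- Consider the job set P = {(1,0), (2,0), (3,0), (4,0), (1,1), (3,1), (0,2), (2,2), (4,2), (5,2)} of pairs (t, c) with temperature t ∈ ℕ and color c ∈ {0,1,2}. Every schedule S' of P with nominal number of color changes C(S') ≤ 4 and total process temperature change T(S') = 7 contains two maximal monochromatic blocks of the same color whose internal orderings by temperature are opposite: one block is strictly increasing in temperature and the other is strictly decreasing in temperature. -/

import Mathlib

/-- A job is a pair `(t, c)` of a natural-number temperature `t` and a color `c ∈ {0,1,2}`. -/
abbrev Job := ℕ × ℕ

/-- Total process temperature change `T(S) = Σ_{i=1}^{N-1} |t(p_{i+1}) - t(p_i)|`. -/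
def totalTempChange : List Job → ℕ
  | p :: q :: rest => Nat.dist p.1 q.1 + totalTempChange (q :: rest)
  | _ => 0

/-- Nominal number of color changes `C(S) = |{i : c(p_i) ≠ c(p_{i+1})}|`. -/
def nominalColorChanges : List Job → ℕ
  | p :: q :: rest => (if p.2 ≠ q.2 then 1 else 0) + nominalColorChanges (q :: rest)
  | _ => 0

/-- The three-color job set from the paper's outlook section. -/
def P : List Job :=
  [(1,0), (2,0), (3,0), (4,0), (1,1), (3,1), (0,2), (2,2), (4,2), (5,2)]

/-!
Minimise `2 T + 3 C` as an integer program over the steps of a schedule. A schedule has nine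
steps, the color-0 jobs have at most eight step ends in total, and at most one step joins the two
jobs `(4, 2)` and `(5, 2)`. Charging 1 for each color-0 step end and 2 for a step between
`(4, 2)` and `(5, 2)` makes every step cost at least 4, so
`2 T + 3 C + 8 + 2 ≥ 9 * 4`, that is `2 T + 3 C ≥ 26`. A schedule with `T = 7` and `C ≤ 4` attains
this bound, hence each of its steps costs exactly 4. Only eleven pairs of jobs do, and the graph
they form has a single Hamiltonian path.
-/

section StepSum

variable {α M : Type*}

/-- The sum of a weight over all pairs of consecutive entries of a list. -/
def stepSum [Add M] [Zero M] (w : α → α → M) : List α → M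
  | a :: b :: l => w a b + stepSum w (b :: l)
  | _ => 0

theorem stepSum_endpoints_add_head_add_getLast [AddCommMonoid M] (f : α → M) :
    ∀ (l : List α) (hl : l ≠ []),
      stepSum (fun a b => f a + f b) l + (f (l.head hl) + f (l.getLast hl)) = 2 • (l.map f).sum
  | [a], _ => by simp [stepSum, two_nsmul]
  | a :: b :: l, _ => by
    have ih := stepSum_endpoints_add_head_add_getLast f (b :: l) (List.cons_ne_nil b l)
    rw [List.head_cons] at ih
    rw [List.map_cons, List.sum_cons, nsmul_add, ← ih, two_nsmul, stepSum, List.head_cons,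
      List.getLast_cons (List.cons_ne_nil b l)]
    abel

-- The steps inside `A` form a forest; in integer programming this is subtour elimination.
theorem stepSum_indicator_le_countP_sub_one (A : α → Prop) [DecidablePred A] :
    ∀ l : List α, stepSum (fun a b => if A a ∧ A b then 1 else 0) l ≤ l.countP (A ·) - 1
  | [] | [_] => Nat.zero_le _
  | a :: b :: l => by
    have ih := stepSum_indicator_le_countP_sub_one A (b :: l)
    by_cases ha : A a <;> by_cases hb : A b <;>
      simp only [stepSum, List.countP_cons, ha, hb, decide_true, decide_false, and_self, and_true,
        and_false, if_true, if_false, Bool.false_eq_true] at ih ⊢ <;>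
      omega

section Ordered

variable [AddCommMonoid M] [PartialOrder M] {w : α → α → M} {k : M}

theorem nsmul_le_stepSum [IsOrderedAddMonoid M] :
    ∀ {l : List α}, l.IsChain (k ≤ w · ·) → (l.length - 1) • k ≤ stepSum w l
  | [], _ | [_], _ => (zero_nsmul k).le
  | a :: b :: l, h => by
    obtain ⟨hab, hl⟩ := List.isChain_cons_cons.1 h
    calc (l.length + 1) • k = k + l.length • k := succ_nsmul' k _
      _ ≤ w a b + stepSum w (b :: l) := add_le_add hab (nsmul_le_stepSum hl)

theorem isChain_eq_of_stepSum_le [IsOrderedCancelAddMonoid M] :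
    ∀ {l : List α}, l.IsChain (k ≤ w · ·) → stepSum w l ≤ (l.length - 1) • k →
      l.IsChain (w · · = k)
  | [], _, _ => .nil
  | [a], _, _ => .singleton a
  | a :: b :: l, h, hsum => by
    obtain ⟨hab, hl⟩ := List.isChain_cons_cons.1 h
    have hrest : l.length • k ≤ stepSum w (b :: l) := nsmul_le_stepSum hl
    have htotal : k + l.length • k = w a b + stepSum w (b :: l) :=
      (add_le_add hab hrest).antisymm (hsum.trans_eq (succ_nsmul' k _))
    obtain ⟨hk, hrest_eq⟩ := (add_eq_add_iff_eq_and_eq hab hrest).1 htotal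
    exact List.isChain_cons_cons.2 ⟨hk.symm, isChain_eq_of_stepSum_le hl hrest_eq.ge⟩

end Ordered

end StepSum

section ChainArrangements

variable {α : Type*} [DecidableEq α] (R : α → α → Prop) [DecidableRel R]

/-- The `R`-chains `a :: l` with `l` an arrangement of `rem`, found by depth-first search. The
first argument is the length of `rem`; it makes the recursion structural, so that the kernel can
evaluate it. -/
def chainArrangements : ℕ → α → List α → List (List α)
  | 0, a, _ => [[a]]
  | n + 1, a, rem =>
    (rem.filter (R a ·)).flatMap fun b => (chainArrangements n b (rem.erase b)).map (a :: ·)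

theorem cons_mem_chainArrangements {l : List α} :
    ∀ {a : α} {rem : List α}, l.Perm rem → (a :: l).IsChain R →
      a :: l ∈ chainArrangements R l.length a rem := by
  induction l with
  | nil => intro a rem _ _; exact List.mem_singleton_self _
  | cons b l ih =>
    intro a rem hperm hchain
    obtain ⟨hab, hl⟩ := List.isChain_cons_cons.1 hchain
    obtain ⟨hb, hperm'⟩ := List.cons_perm_iff_perm_erase.1 hperm
    exact List.mem_flatMap.2 ⟨b, List.mem_filter.2 ⟨hb, decide_eq_true hab⟩,
      List.mem_map_of_mem (ih hperm' hl)⟩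

end ChainArrangements

/-- The optimal schedule of `P` that starts at temperature `0`. -/
def optimalSchedule : List Job :=
  [(0,2), (2,2), (2,0), (1,0), (1,1), (3,1), (3,0), (4,0), (4,2), (5,2)]

/-- The hot jobs of color 2: in `P`, exactly `(4, 2)` and `(5, 2)`. -/
abbrev IsHotTwo (p : Job) : Prop := 4 ≤ p.1 ∧ p.2 = 2

/-- The indicator of color 0. -/
def colorZero (p : Job) : ℕ := if p.2 = 0 then 1 else 0

/-- The cost of a step in the objective `2 T + 3 C`, plus the dual prices: 1 for each end of
color 0, and 2 if both ends are hot. -/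
def pricedCost (p q : Job) : ℕ :=
  2 * Nat.dist p.1 q.1 + 3 * (if p.2 ≠ q.2 then 1 else 0) + (colorZero p + colorZero q) +
    2 * (if IsHotTwo p ∧ IsHotTwo q then 1 else 0)

theorem stepSum_pricedCost : ∀ S : List Job,
    stepSum pricedCost S = 2 * totalTempChange S + 3 * nominalColorChanges S +
      stepSum (fun p q => colorZero p + colorZero q) S +
      2 * stepSum (fun p q => if IsHotTwo p ∧ IsHotTwo q then 1 else 0) S
  | [] | [_] => rfl
  | p :: q :: S => by
    rw [stepSum, stepSum_pricedCost (q :: S), pricedCost, totalTempChange, nominalColorChanges,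
      stepSum, stepSum]
    ring

theorem four_le_pricedCost : ∀ p ∈ P, ∀ q ∈ P, p ≠ q → 4 ≤ pricedCost p q := by
  decide

/-- The pairs of jobs of `P` joined by a step of the least priced cost `4`, each listed in one
direction. -/
def tightPairs : List (Job × Job) :=
  [((1,0), (2,0)), ((2,0), (3,0)), ((3,0), (4,0)), ((1,1), (3,1)),
   ((0,2), (2,2)), ((2,2), (4,2)), ((4,2), (5,2)),
   ((1,0), (1,1)), ((3,0), (3,1)), ((2,0), (2,2)), ((4,0), (4,2))]

/-- Adjacency in the graph with edges `tightPairs`. -/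
abbrev TightAdj (p q : Job) : Prop := (p, q) ∈ tightPairs ∨ (q, p) ∈ tightPairs

theorem tightAdj_of_pricedCost_eq_four :
    ∀ p ∈ P, ∀ q ∈ P, pricedCost p q = 4 → TightAdj p q := by
  decide

section Schedule

variable {S : List Job}

theorem stepSum_colorZero_le (hperm : S.Perm P) :
    stepSum (fun p q => colorZero p + colorZero q) S ≤ 8 := by
  have hne : S ≠ [] := fun h => List.cons_ne_nil _ _ (List.nil_perm.1 (h ▸ hperm))
  calc stepSum (fun p q => colorZero p + colorZero q) S
      ≤ 2 • (S.map colorZero).sum :=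
        Nat.le.intro (stepSum_endpoints_add_head_add_getLast colorZero S hne)
    _ = 2 • (P.map colorZero).sum := by rw [(hperm.map colorZero).sum_eq]
    _ = 8 := by decide

theorem stepSum_isHotTwo_le_one (hperm : S.Perm P) :
    stepSum (fun p q => if IsHotTwo p ∧ IsHotTwo q then 1 else 0) S ≤ 1 :=
  calc stepSum (fun p q => if IsHotTwo p ∧ IsHotTwo q then 1 else 0) S
      ≤ S.countP (IsHotTwo ·) - 1 := stepSum_indicator_le_countP_sub_one IsHotTwo S
    _ = P.countP (IsHotTwo ·) - 1 := by rw [hperm.countP_eq]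
    _ = 1 := by decide

theorem isChain_tightAdj (hperm : S.Perm P)
    (hcost : 2 * totalTempChange S + 3 * nominalColorChanges S ≤ 26) : S.IsChain TightAdj := by
  have hnodup : S.Nodup := hperm.nodup_iff.2 (by decide)
  have hlower : S.IsChain (4 ≤ pricedCost · ·) :=
    (hnodup.imp_of_mem fun hp hq =>
      four_le_pricedCost _ (hperm.subset hp) _ (hperm.subset hq)).isChain
  have hupper : stepSum pricedCost S ≤ (S.length - 1) • 4 := by
    rw [stepSum_pricedCost, hperm.length_eq]
    calc _ ≤ 26 + 8 + 2 * 1 := by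
          gcongr
          exacts [stepSum_colorZero_le hperm, stepSum_isHotTwo_le_one hperm]
      _ = (P.length - 1) • 4 := rfl
  exact (isChain_eq_of_stepSum_le hlower hupper).imp_of_mem_imp fun p q hp hq =>
    tightAdj_of_pricedCost_eq_four p (hperm.subset hp) q (hperm.subset hq)

-- By hand: `(0,2)` and `(5,2)` have one neighbour each, so they are the two ends, and the inner
-- jobs `(1,0)`, `(1,1)`, `(3,1)`, `(4,0)` have two neighbours each, so all their edges are used.
theorem chainArrangements_tightAdj :
    ∀ p ∈ P, ∀ S ∈ chainArrangements TightAdj 9 p (P.erase p),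
      S = optimalSchedule ∨ S = optimalSchedule.reverse := by
  decide +kernel

theorem eq_optimalSchedule_or_reverse (hperm : S.Perm P)
    (hcost : 2 * totalTempChange S + 3 * nominalColorChanges S ≤ 26) :
    S = optimalSchedule ∨ S = optimalSchedule.reverse := by
  have hchain := isChain_tightAdj hperm hcost
  cases S with
  | nil => exact absurd hperm.length_eq (by decide)
  | cons p S =>
    obtain ⟨hp, hperm'⟩ := List.cons_perm_iff_perm_erase.1 hperm
    have hlength : S.length = 9 := Nat.succ.inj hperm.length_eq
    exact chainArrangements_tightAdj p hp _ (hlength ▸ cons_mem_chainArrangements _ hperm' hchain)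

end Schedule

/-- Every optimal schedule of `P` (at most `4` nominal color changes, total temperature
change `7`) contains two maximal monochromatic blocks of the same color with opposite
internal orderings: one strictly increasing and the other strictly decreasing in
temperature. -/
theorem outlook_opposite_blocks (S' : List Job) (hperm : S'.Perm P)
    (hC : nominalColorChanges S' ≤ 4) (hT : totalTempChange S' = 7) :
    ∃ (pre B₁ mid B₂ post : List Job) (col : ℕ),
      S' = pre ++ B₁ ++ mid ++ B₂ ++ post ∧
      mid ≠ [] ∧ 2 ≤ B₁.length ∧ 2 ≤ B₂.length ∧
      (∀ p ∈ B₁, p.2 = col) ∧ (∀ p ∈ B₂, p.2 = col) ∧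
      (∀ p, pre.getLast? = some p → p.2 ≠ col) ∧
      (∀ p, mid.head? = some p → p.2 ≠ col) ∧
      (∀ p, mid.getLast? = some p → p.2 ≠ col) ∧
      (∀ p, post.head? = some p → p.2 ≠ col) ∧
      ((List.Chain' (fun p q : Job => p.1 < q.1) B₁ ∧
        List.Chain' (fun p q : Job => q.1 < p.1) B₂) ∨
       (List.Chain' (fun p q : Job => q.1 < p.1) B₁ ∧
        List.Chain' (fun p q : Job => p.1 < q.1) B₂)) := by
  rcases eq_optimalSchedule_or_reverse hperm (by omega) with rfl | rfl
  · refine ⟨[(0,2), (2,2)], [(2,0), (1,0)], [(1,1), (3,1)], [(3,0), (4,0)], [(4,2), (5,2)], 0,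
      rfl, ?_⟩
    simp [List.Chain']
  · refine ⟨[(5,2), (4,2)], [(4,0), (3,0)], [(3,1), (1,1)], [(1,0), (2,0)], [(2,2), (0,2)], 0,
      rfl, ?_⟩
    simp [List.Chain']
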